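/- Let R be a non-integer real number with R > 0, let m be a natural number, and let q > 0 and x > 0 be real. Then, along the coupled sequence h_N = q x / N, the truncated Grünwald–Letnikov sum of order R of f(x) = x^m converges: lim_{N→∞} (q x/N)^{-R} ∑_{k=0}^{N} (-1)^k C(R,k) (x - k·q x/N)^m = (sin(πR)/π) · Γ(R+1) · q^{-R} · x^{m-R} · ∑_{j=0}^{m} (-1)^j C(m,j) q^{j} / (R - j). -/

import Mathlib

open Finset Filter Real

/-- Generalized binomial coefficient C(R,k) = R(R-1)⋯(R-k+1)/k! for real R and natural k. -/
noncomputable def genBinom (R : ℝ) (k : ℕ) : ℝ :=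
  (∏ i ∈ Finset.range k, (R - i)) / (Nat.factorial k)

lemma signed_genBinom (R : ℝ) (k : ℕ) :
    (-1 : ℝ) ^ k * genBinom R k = (∏ i ∈ Finset.range k, ((i : ℝ) - R)) / (k.factorial : ℝ) := by
  unfold genBinom
  rw [← mul_div_assoc]
  congr 1
  have : ∀ i ∈ Finset.range k, ((i : ℝ) - R) = (-1) * (R - i) := fun i _ => by ring
  rw [Finset.prod_congr rfl this, Finset.prod_mul_distrib]
  simp

lemma falling_sum (R : ℝ) (hR : ∀ n : ℤ, R ≠ (n : ℝ)) (j N : ℕ) :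
    ∑ k ∈ Finset.range (N + 1), (-1 : ℝ) ^ k * genBinom R k * (∏ i ∈ Finset.range j, ((k : ℝ) - i))
      = -((∏ i ∈ Finset.range (N + 1), ((i : ℝ) - R)) / (N.factorial : ℝ))
          * (∏ i ∈ Finset.range j, ((N : ℝ) - i)) / (R - j) := by
  have hj : R - j ≠ 0 := sub_ne_zero.mpr (by exact_mod_cast hR j)
  induction N with
  | zero =>
    cases j with
    | zero =>
      have h0 : R ≠ 0 := by simpa using hj
      simp [genBinom, h0]
    | succ j => simp [Finset.prod_range_succ']
  | succ N ih =>
    rw [Finset.sum_range_succ, ih, signed_genBinom, Finset.prod_range_succ _ (N + 1),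
      Nat.factorial_succ]
    have hN : (N.factorial : ℝ) ≠ 0 := by positivity
    have hN1 : (N : ℝ) + 1 ≠ 0 := by positivity
    generalize (∏ i ∈ Finset.range (N + 1), ((i : ℝ) - R)) = Q
    cases j with
    | zero =>
      simp only [Finset.range_zero, Finset.prod_empty]
      push_cast at *
      field_simp
      ring
    | succ j =>
      have e1 : (∏ i ∈ Finset.range (j + 1), (((N + 1 : ℕ) : ℝ) - i))
          = (∏ i ∈ Finset.range j, ((N : ℝ) - i)) * (N + 1) := by
        rw [Finset.prod_range_succ']
        push_cast
        congr 1
        · exact Finset.prod_congr rfl fun i _ => by ring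
        · ring
      rw [e1, Finset.prod_range_succ]
      push_cast at *
      field_simp
      ring

lemma Q_tendsto (R : ℝ) (hR : ∀ n : ℤ, R ≠ (n : ℝ)) :
    Tendsto (fun N : ℕ => (N : ℝ) ^ R *
      ((∏ i ∈ Finset.range (N + 1), ((i : ℝ) - R)) / (N.factorial : ℝ))) atTop
      (nhds (Real.Gamma (-R))⁻¹) := by
  have hG : Real.Gamma (-R) ≠ 0 := by
    apply Real.Gamma_ne_zero
    intro m h
    exact hR m (by push_cast; linarith)
  refine ((Real.GammaSeq_tendsto_Gamma (-R)).inv₀ hG).congr fun N => ?_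
  rw [Real.GammaSeq, inv_div, Real.rpow_neg (Nat.cast_nonneg N)]
  have : ∀ i ∈ Finset.range (N + 1), (-R + (i : ℝ)) = ((i : ℝ) - R) := fun i _ => by ring
  rw [Finset.prod_congr rfl this]
  simp only [div_eq_mul_inv, mul_inv, inv_inv]
  ring

lemma falling_ratio (j : ℕ) :
    Tendsto (fun N : ℕ => (∏ i ∈ Finset.range j, ((N : ℝ) - i)) / (N : ℝ) ^ j) atTop (nhds 1) := by
  have h : Tendsto (fun N : ℕ => ∏ i ∈ Finset.range j, (1 - (i : ℝ) / (N : ℝ))) atTop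
      (nhds (∏ i ∈ Finset.range j, (1 - (0 : ℝ)))) :=
    tendsto_finset_prod _ fun i _ =>
      tendsto_const_nhds.sub (tendsto_const_div_atTop_nhds_zero_nat (i : ℝ))
  simp only [sub_zero, Finset.prod_const_one] at h
  refine h.congr' ?_
  filter_upwards [eventually_gt_atTop 0] with N hN
  have hN' : (N : ℝ) ≠ 0 := by positivity
  have : ∀ i ∈ Finset.range j, (1 - (i : ℝ) / (N : ℝ)) = ((N : ℝ) - i) / N :=
    fun i _ => by field_simp
  rw [Finset.prod_congr rfl this, Finset.prod_div_distrib]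
  simp

lemma mixed_tendsto (R : ℝ) (hR : ∀ n : ℤ, R ≠ (n : ℝ)) (a : ℕ) : ∀ j : ℕ,
    Tendsto (fun N : ℕ => (N : ℝ) ^ R / (N : ℝ) ^ (a + j) *
      ∑ k ∈ Finset.range (N + 1), (-1 : ℝ) ^ k * genBinom R k *
        ((k : ℝ) ^ a * ∏ i ∈ Finset.range j, ((k : ℝ) - i))) atTop
      (nhds (-(Real.Gamma (-R))⁻¹ / (R - (a + j : ℕ)))) := by
  induction a with
  | zero =>
    intro j
    have h := (((Q_tendsto R hR).mul (falling_ratio j)).neg).div_const (R - j)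
    simp only [mul_one] at h
    simp only [zero_add, pow_zero, one_mul]
    refine h.congr fun N => ?_
    rw [falling_sum R hR]
    ring
  | succ a ih =>
    intro j
    have h1 := ih (j + 1)
    have h2 := ((ih j).mul (tendsto_const_div_atTop_nhds_zero_nat (j : ℝ)))
    have h := h1.add h2
    rw [mul_zero, add_zero] at h
    have e : a + 1 + j = a + (j + 1) := by ring
    rw [e]
    refine h.congr fun N => ?_
    have hs : ∑ k ∈ Finset.range (N + 1), (-1 : ℝ) ^ k * genBinom R k *
        ((k : ℝ) ^ (a + 1) * ∏ i ∈ Finset.range j, ((k : ℝ) - i))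
      = ∑ k ∈ Finset.range (N + 1), (-1 : ℝ) ^ k * genBinom R k *
          ((k : ℝ) ^ a * ∏ i ∈ Finset.range (j + 1), ((k : ℝ) - i))
        + j * ∑ k ∈ Finset.range (N + 1), (-1 : ℝ) ^ k * genBinom R k *
          ((k : ℝ) ^ a * ∏ i ∈ Finset.range j, ((k : ℝ) - i)) := by
      rw [Finset.mul_sum, ← Finset.sum_add_distrib]
      refine Finset.sum_congr rfl fun k _ => ?_
      rw [Finset.prod_range_succ]
      ring
    rw [hs, ← add_assoc a j 1, pow_succ (N : ℝ) (a + j)]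
    simp only [div_eq_mul_inv, mul_inv]
    ring

lemma power_tendsto (R : ℝ) (hR : ∀ n : ℤ, R ≠ (n : ℝ)) (j : ℕ) :
    Tendsto (fun N : ℕ => (N : ℝ) ^ R / (N : ℝ) ^ j *
      ∑ k ∈ Finset.range (N + 1), (-1 : ℝ) ^ k * genBinom R k * (k : ℝ) ^ j) atTop
      (nhds (-(Real.Gamma (-R))⁻¹ / (R - j))) := by
  simpa using mixed_tendsto R hR j 0

lemma reflection_const (R : ℝ) (hR0 : 0 < R) :
    -(Real.Gamma (-R))⁻¹ = Real.sin (Real.pi * R) / Real.pi * Real.Gamma (R + 1) := by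
  have h := Real.Gamma_mul_Gamma_one_sub (-R)
  have hG : Real.Gamma (R + 1) ≠ 0 := (Real.Gamma_pos_of_pos (by linarith)).ne'
  have e : 1 - -R = R + 1 := by ring
  rw [e, mul_neg, Real.sin_neg, div_neg] at h
  have h2 : Real.Gamma (-R) = -(Real.pi / Real.sin (Real.pi * R)) / Real.Gamma (R + 1) := by
    rw [eq_div_iff hG, h]
  rw [h2]
  simp only [div_eq_mul_inv, mul_inv, inv_inv, inv_neg, neg_mul, neg_neg, inv_neg]
  ring

/-- For non-integer R > 0, natural m, and q, x > 0, the truncated Grünwald–Letnikov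
    sum of order R of f(x) = x^m along h_N = qx/N converges to
    (sin(πR)/π) Γ(R+1) q^{-R} x^{m-R} ∑_{j=0}^{m} (-1)^j C(m,j) q^j/(R-j). -/
theorem coupled_GL_power_limit (R : ℝ) (hR : ∀ n : ℤ, R ≠ (n : ℝ)) (hR0 : 0 < R)
    (m : ℕ) (q x : ℝ) (hq : 0 < q) (hx : 0 < x) :
    Filter.Tendsto
      (fun N : ℕ =>
        (q * x / N) ^ (-R) *
          ∑ k ∈ Finset.range (N + 1),
            (-1 : ℝ) ^ k * genBinom R k * (x - k * (q * x / N)) ^ m)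
      Filter.atTop
      (nhds (Real.sin (Real.pi * R) / Real.pi * Real.Gamma (R + 1) * q ^ (-R)
        * x ^ ((m : ℝ) - R)
        * ∑ j ∈ Finset.range (m + 1), (-1 : ℝ) ^ j * (m.choose j : ℝ) * q ^ j / (R - j))) := by
  have hlim := tendsto_finset_sum (Finset.range (m + 1)) fun j (_ : j ∈ Finset.range (m + 1)) =>
    (power_tendsto R hR j).const_mul
      ((q * x) ^ (-R) * ((m.choose j : ℝ) * x ^ (m - j) * (-(q * x)) ^ j))
  have hval : ∑ j ∈ Finset.range (m + 1),
      (q * x) ^ (-R) * ((m.choose j : ℝ) * x ^ (m - j) * (-(q * x)) ^ j)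
        * (-(Real.Gamma (-R))⁻¹ / (R - j))
      = Real.sin (Real.pi * R) / Real.pi * Real.Gamma (R + 1) * q ^ (-R)
        * x ^ ((m : ℝ) - R)
        * ∑ j ∈ Finset.range (m + 1), (-1 : ℝ) ^ j * (m.choose j : ℝ) * q ^ j / (R - j) := by
    rw [Finset.mul_sum]
    refine Finset.sum_congr rfl fun j hj => ?_
    have hjm : j ≤ m := Nat.lt_succ_iff.mp (Finset.mem_range.mp hj)
    have hxm : x ^ ((m : ℝ) - R) = x ^ (-R) * (x ^ (m - j) * x ^ j) := by
      rw [← pow_add, Nat.sub_add_cancel hjm, sub_eq_add_neg, Real.rpow_add hx, Real.rpow_natCast]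
      ring
    rw [reflection_const R hR0, Real.mul_rpow hq.le hx.le, hxm, neg_pow, mul_pow]
    ring
  rw [hval] at hlim
  refine hlim.congr' ?_
  filter_upwards [eventually_gt_atTop 0] with N hN
  have hN' : (0 : ℝ) < N := by exact_mod_cast hN
  have hpow : (q * x / N) ^ (-R) = (q * x) ^ (-R) * (N : ℝ) ^ R := by
    rw [Real.div_rpow (by positivity) hN'.le, Real.rpow_neg hN'.le, div_inv_eq_mul]
  rw [hpow, Finset.mul_sum]
  simp only [Finset.mul_sum]
  rw [Finset.sum_comm]
  refine Finset.sum_congr rfl fun k _ => ?_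
  have hb : (x - k * (q * x / N)) ^ m
      = ∑ j ∈ Finset.range (m + 1), (-(k * (q * x / N))) ^ j * x ^ (m - j) * (m.choose j : ℝ) := by
    rw [← add_pow]
    congr 1
    ring
  rw [hb, Finset.mul_sum, Finset.mul_sum]
  refine Finset.sum_congr rfl fun j _ => ?_
  have : (-((k : ℝ) * (q * x / N))) ^ j = (-(q * x)) ^ j * (k : ℝ) ^ j / (N : ℝ) ^ j := by
    rw [← mul_pow, ← div_pow]
    congr 1
    ring
  rw [this]
  ring
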